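/- arXiv:2110.02647 — 7 statements merged into one kernel-verified Lean document; each statement's English description precedes it below -/
import Mathlib

section
/- If a probability measure π on X is absolutely continuous with respect to ρ, Q is π-integrable, and ∫ Q dπ + KL(π‖ρ) = −log ∫ e^{−Q} dρ, then π equals the Gibbs tilt π* of ρ by Q, i.e. π is the measure with density x ↦ e^{−Q(x)} / ∫ e^{−Q} dρ with respect to ρ. -/
open MeasureTheory

open Classical in
/-- The Kullback–Leibler divergence of `π` with respect to `ρ`, with value `+∞` when `π` is
not absolutely continuous with respect to `ρ` (or the log-likelihood ratio is not integrable). -/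
noncomputable def klDiv {X : Type*} [MeasurableSpace X] (π ρ : Measure X) : EReal :=
  if π ≪ ρ ∧ Integrable (llr π ρ) π
  then ((∫ x, llr π ρ x ∂π : ℝ) : EReal)
  else ⊤

/-!
Tilting the reference measure shifts the Kullback–Leibler divergence by an explicit real number,
`KL(π‖ρ.tilted (-Q)) = ∫ Q ∂π + KL(π‖ρ) + log ∫ exp (-Q) ∂ρ`. The equation characterising a
minimiser therefore says `KL(π‖ρ.tilted (-Q)) = 0`, which holds exactly when the two probability
measures agree.
-/

section Tilted

variable {X : Type*} [MeasurableSpace X] {μ ν : Measure X} {f : X → ℝ}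

lemma absolutelyContinuous_tilted_right_iff (hfν : Integrable (fun x ↦ Real.exp (f x)) ν) :
    μ ≪ ν.tilted f ↔ μ ≪ ν :=
  ⟨fun h ↦ h.trans (tilted_absolutelyContinuous ν f),
    fun h ↦ h.trans (absolutelyContinuous_tilted hfν)⟩

lemma integrable_llr_tilted_right_iff [IsFiniteMeasure μ] [SigmaFinite ν] (hμν : μ ≪ ν)
    (hfμ : Integrable f μ) (hfν : Integrable (fun x ↦ Real.exp (f x)) ν) :
    Integrable (llr μ (ν.tilted f)) μ ↔ Integrable (llr μ ν) μ := by
  rw [integrable_congr (llr_tilted_right hμν hfν)]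
  exact integrable_add_iff_integrable_right (hfμ.neg.add (integrable_const _))

end Tilted

section KLDiv

variable {X : Type*} [MeasurableSpace X] {μ ν : Measure X} {f : X → ℝ}

lemma klDiv_of_ac_of_integrable (hμν : μ ≪ ν) (h_int : Integrable (llr μ ν) μ) :
    klDiv μ ν = ((∫ x, llr μ ν x ∂μ : ℝ) : EReal) :=
  if_pos ⟨hμν, h_int⟩

lemma klDiv_of_not_ac (hμν : ¬ μ ≪ ν) : klDiv μ ν = ⊤ :=
  if_neg fun h ↦ hμν h.1

lemma klDiv_of_not_integrable (h_int : ¬ Integrable (llr μ ν) μ) : klDiv μ ν = ⊤ :=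
  if_neg fun h ↦ h_int h.2

lemma klDiv_eq_coe_informationTheory_klDiv [IsFiniteMeasure μ] [IsFiniteMeasure ν]
    (h_univ : μ .univ = ν .univ) : klDiv μ ν = (InformationTheory.klDiv μ ν : EReal) := by
  by_cases hμν : μ ≪ ν
  swap
  · rw [klDiv_of_not_ac hμν, InformationTheory.klDiv_of_not_ac hμν, EReal.coe_ennreal_top]
  by_cases h_int : Integrable (llr μ ν) μ
  swap
  · rw [klDiv_of_not_integrable h_int, InformationTheory.klDiv_of_not_integrable h_int,
      EReal.coe_ennreal_top]
  rw [klDiv_of_ac_of_integrable hμν h_int,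
    ← InformationTheory.toReal_klDiv_of_measure_eq hμν h_univ,
    EReal.coe_ennreal_toReal (InformationTheory.klDiv_ne_top hμν h_int)]

lemma klDiv_eq_zero_iff [IsFiniteMeasure μ] [IsFiniteMeasure ν] (h_univ : μ .univ = ν .univ) :
    klDiv μ ν = 0 ↔ μ = ν := by
  rw [klDiv_eq_coe_informationTheory_klDiv h_univ, EReal.coe_ennreal_eq_zero,
    InformationTheory.klDiv_eq_zero_iff]

lemma klDiv_tilted_right [IsProbabilityMeasure μ] [SigmaFinite ν]
    (hfμ : Integrable f μ) (hfν : Integrable (fun x ↦ Real.exp (f x)) ν) :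
    klDiv μ (ν.tilted f)
      = klDiv μ ν + ((Real.log (∫ x, Real.exp (f x) ∂ν) - ∫ x, f x ∂μ : ℝ) : EReal) := by
  by_cases hμν : μ ≪ ν
  swap
  · have hμν_tilted : ¬ μ ≪ ν.tilted f := (absolutelyContinuous_tilted_right_iff hfν).not.mpr hμν
    rw [klDiv_of_not_ac hμν, klDiv_of_not_ac hμν_tilted, EReal.top_add_coe]
  by_cases h_int : Integrable (llr μ ν) μ
  swap
  · have h_int_tilted : ¬ Integrable (llr μ (ν.tilted f)) μ :=
      (integrable_llr_tilted_right_iff hμν hfμ hfν).not.mpr h_int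
    rw [klDiv_of_not_integrable h_int, klDiv_of_not_integrable h_int_tilted, EReal.top_add_coe]
  rw [klDiv_of_ac_of_integrable hμν h_int,
    klDiv_of_ac_of_integrable (hμν.trans (absolutelyContinuous_tilted hfν))
      (integrable_llr_tilted_right hμν hfμ h_int hfν),
    integral_llr_tilted_right hμν hfμ hfν h_int, ← EReal.coe_add]
  congr 1
  ring

lemma klDiv_tilted_neg_right [IsProbabilityMeasure μ] [SigmaFinite ν]
    (hfμ : Integrable f μ) (hfν : Integrable (fun x ↦ Real.exp (-f x)) ν) :
    klDiv μ (ν.tilted fun x ↦ -f x)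
      = ((Real.log (∫ x, Real.exp (-f x) ∂ν) : ℝ) : EReal)
        + (((∫ x, f x ∂μ : ℝ) : EReal) + klDiv μ ν) := by
  rw [klDiv_tilted_right (f := fun x ↦ -f x) hfμ.neg hfν, integral_neg, sub_neg_eq_add,
    EReal.coe_add, add_comm, add_assoc]

end KLDiv

theorem gibbs_variational_unique_general
    {X : Type*} [MeasurableSpace X] {ρ : Measure X} [SigmaFinite ρ] {Q : X → ℝ}
    (hexp : Integrable (fun x ↦ Real.exp (-Q x)) ρ)
    {π : Measure X} [IsProbabilityMeasure π] (hint : Integrable Q π) :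
    ((∫ x, Q x ∂π : ℝ) : EReal) + klDiv π ρ
        = ((- Real.log (∫ x, Real.exp (-Q x) ∂ρ) : ℝ) : EReal)
      ↔ π = ρ.tilted (fun x ↦ -Q x) := by
  rcases eq_zero_or_neZero ρ with rfl | _
  · have hac : ¬ π ≪ 0 := fun h ↦
      IsProbabilityMeasure.ne_zero π (Measure.absolutelyContinuous_zero_iff.mp h)
    simp [klDiv_of_not_ac hac, IsProbabilityMeasure.ne_zero π]
  have := isProbabilityMeasure_tilted hexp
  have hmass : π .univ = ρ.tilted (fun x ↦ -Q x) .univ := by rw [measure_univ, measure_univ]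
  have hcancel : (0 : EReal) = ((Real.log (∫ x, Real.exp (-Q x) ∂ρ) : ℝ) : EReal)
      + ((-Real.log (∫ x, Real.exp (-Q x) ∂ρ) : ℝ) : EReal) := by
    rw [← EReal.coe_add, add_neg_cancel, EReal.coe_zero]
  rw [← klDiv_eq_zero_iff hmass, klDiv_tilted_neg_right hint hexp, hcancel,
    (EReal.addLECancellable_coe _).inj]

/-- Uniqueness of the minimiser in the Gibbs variational principle: if a probability measure `π`
absolutely continuous w.r.t. `ρ` with `Q` `π`-integrable satisfies
`∫ Q ∂π + KL(π‖ρ) = - log ∫ exp (-Q) ∂ρ`, then `π` is the Gibbs tilt of `ρ` by `Q`,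
i.e. the measure with density `x ↦ exp (-Q x) / ∫ exp (-Q) ∂ρ` with respect to `ρ`. -/
theorem gibbs_variational_unique
    {X : Type*} [MeasurableSpace X] (ρ : Measure X) [IsProbabilityMeasure ρ]
    (Q : X → ℝ) (hQmeas : Measurable Q) (C : ℝ) (hQbdd : ∀ x, |Q x| ≤ C)
    (π : Measure X) [IsProbabilityMeasure π] (hac : π ≪ ρ) (hint : Integrable Q π)
    (heq : ((∫ x, Q x ∂π : ℝ) : EReal) + klDiv π ρ
        = ((- Real.log (∫ x, Real.exp (-Q x) ∂ρ) : ℝ) : EReal)) :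
    π = ρ.tilted (fun x => -Q x) := by
  have hexp : Integrable (fun x ↦ Real.exp (-Q x)) ρ := by
    simpa using ProbabilityTheory.integrable_exp_mul_of_mem_Icc (t := -1) hQmeas.aemeasurable
      (ae_of_all ρ fun x ↦ abs_le.mp (hQbdd x))
  exact (gibbs_variational_unique_general hexp hint).mp heq
end

section
/- For every probability measure π absolutely continuous with respect to ρ such that q is π-integrable and KL(π‖ρ) < ∞, the three-point identity KL(π‖ρ) − KL(π_λ‖ρ) = KL(π‖π_λ) + λ (∫ q dπ_λ − ∫ q dπ) holds, where π_λ is the Gibbs tilt of ρ by λq. -/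
open MeasureTheory

/-!
For `f = -λq` and `Z = ∫ exp f ∂ρ`, integrating `log dπ/dρ = log dπ/dπ_λ + f - log Z` against `π`
gives `KL(π‖ρ) = KL(π‖π_λ) + ∫ f ∂π - log Z`, where both divergences are finite or both are
infinite. The case `π = π_λ` evaluates `KL(π_λ‖ρ)`, and `log Z` cancels in the difference.
-/

lemma integrable_exp_neg_mul_of_abs_le {X : Type*} [MeasurableSpace X] {μ : Measure X}
    [IsFiniteMeasure μ] {g : X → ℝ} {C : ℝ} (hg : AEMeasurable g μ) (hgC : ∀ᵐ x ∂μ, |g x| ≤ C)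
    (t : ℝ) : Integrable (fun x => Real.exp (-(t * g x))) μ := by
  simpa only [neg_mul] using ProbabilityTheory.integrable_exp_mul_of_mem_Icc (t := -t) hg
    (hgC.mono fun _ => abs_le.mp)

lemma klDiv_self {X : Type*} [MeasurableSpace X] (μ : Measure X) [SigmaFinite μ] :
    klDiv μ μ = 0 := by
  have integrable_llr_self : Integrable (llr μ μ) μ :=
    (integrable_congr (llr_self μ)).mpr (integrable_zero _ _ _)
  have integral_llr_self : ∫ x, llr μ μ x ∂μ = 0 := integral_eq_zero_of_ae (llr_self μ)
  rw [klDiv, if_pos ⟨.rfl, integrable_llr_self⟩, integral_llr_self, EReal.coe_zero]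

section Tilted

variable {X : Type*} [MeasurableSpace X] {π ρ : Measure X} {f : X → ℝ}

lemma absolutelyContinuous_tilted_iff (hexp : Integrable (fun x => Real.exp (f x)) ρ) :
    π ≪ ρ.tilted f ↔ π ≪ ρ :=
  ⟨fun h => h.trans (tilted_absolutelyContinuous ρ f),
    fun h => h.trans (absolutelyContinuous_tilted hexp)⟩

lemma integrable_llr_tilted_right_iff_s3 [IsFiniteMeasure π] [SigmaFinite ρ] (hac : π ≪ ρ)
    (hf : Integrable f π) (hexp : Integrable (fun x => Real.exp (f x)) ρ) :
    Integrable (llr π (ρ.tilted f)) π ↔ Integrable (llr π ρ) π := by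
  rw [integrable_congr (llr_tilted_right hac hexp)]
  exact integrable_add_iff_integrable_right' (hf.neg.add (integrable_const _))

lemma klDiv_eq_klDiv_tilted_add [IsProbabilityMeasure π] [SigmaFinite ρ]
    (hf : Integrable f π) (hexp : Integrable (fun x => Real.exp (f x)) ρ) :
    klDiv π ρ = klDiv π (ρ.tilted f)
      + ((∫ x, f x ∂π - Real.log (∫ x, Real.exp (f x) ∂ρ) : ℝ) : EReal) := by
  have finite_iff : (π ≪ ρ.tilted f ∧ Integrable (llr π (ρ.tilted f)) π) ↔
      (π ≪ ρ ∧ Integrable (llr π ρ) π) := by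
    rw [absolutelyContinuous_tilted_iff hexp]
    exact and_congr_right fun hac => integrable_llr_tilted_right_iff_s3 hac hf hexp
  by_cases hfin : π ≪ ρ ∧ Integrable (llr π ρ) π
  · rw [klDiv, klDiv, if_pos hfin, if_pos (finite_iff.mpr hfin),
      integral_llr_tilted_right hfin.1 hf hexp hfin.2, ← EReal.coe_add]
    congr 1
    ring
  · rw [klDiv, klDiv, if_neg hfin, if_neg (mt finite_iff.mp hfin), EReal.top_add_coe]

lemma klDiv_tilted_self [NeZero ρ] [SigmaFinite ρ]
    (hf : Integrable f (ρ.tilted f)) (hexp : Integrable (fun x => Real.exp (f x)) ρ) :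
    klDiv (ρ.tilted f) ρ
      = ((∫ x, f x ∂(ρ.tilted f) - Real.log (∫ x, Real.exp (f x) ∂ρ) : ℝ) : EReal) := by
  have := isProbabilityMeasure_tilted hexp
  rw [klDiv_eq_klDiv_tilted_add hf hexp, klDiv_self, zero_add]

lemma klDiv_sub_klDiv_tilted_self [IsProbabilityMeasure π] [NeZero ρ] [SigmaFinite ρ]
    (hf : Integrable f π) (hf_tilted : Integrable f (ρ.tilted f))
    (hexp : Integrable (fun x => Real.exp (f x)) ρ) :
    klDiv π ρ - klDiv (ρ.tilted f) ρ
      = klDiv π (ρ.tilted f) + ((∫ x, f x ∂π - ∫ x, f x ∂(ρ.tilted f) : ℝ) : EReal) := by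
  rw [klDiv_tilted_self hf_tilted hexp, klDiv_eq_klDiv_tilted_add hf hexp, sub_eq_add_neg,
    ← EReal.coe_neg, add_assoc, ← EReal.coe_add]
  congr 2
  ring

end Tilted

theorem three_point_identity_general
    {X : Type*} [MeasurableSpace X] (ρ : Measure X) [NeZero ρ] [SigmaFinite ρ]
    (q : X → ℝ) (lam : ℝ) (hexp : Integrable (fun x => Real.exp (-(lam * q x))) ρ)
    (hint_tilted : Integrable q (ρ.tilted (fun x => -(lam * q x))))
    (π : Measure X) [IsProbabilityMeasure π] (hint : Integrable q π) :
    klDiv π ρ - klDiv (ρ.tilted (fun x => -(lam * q x))) ρ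
      = klDiv π (ρ.tilted (fun x => -(lam * q x)))
        + ((lam * ((∫ x, q x ∂(ρ.tilted (fun x => -(lam * q x)))) - ∫ x, q x ∂π) : ℝ) :
          EReal) := by
  have gibbs_identity := klDiv_sub_klDiv_tilted_self (f := fun x => -(lam * q x))
    (hint.const_mul lam).neg (hint_tilted.const_mul lam).neg hexp
  simp only [integral_neg, integral_const_mul] at gibbs_identity
  rw [gibbs_identity]
  congr 2
  ring

/-- Three-point identity: for every probability measure `π ≪ ρ` with `q` `π`-integrable and
`KL(π‖ρ) < ∞`, one has `KL(π‖ρ) - KL(π_λ‖ρ) = KL(π‖π_λ) + λ (∫ q ∂π_λ - ∫ q ∂π)`, where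
`π_λ = ρ.tilted (-λ q)` is the Gibbs tilt of `ρ` by `λ q`. -/
theorem three_point_identity
    {X : Type*} [MeasurableSpace X] (ρ : Measure X) [IsProbabilityMeasure ρ]
    (q : X → ℝ) (hqmeas : Measurable q) (C : ℝ) (hqbdd : ∀ x, |q x| ≤ C)
    (lam : ℝ) (hlam : 0 < lam)
    (π : Measure X) [IsProbabilityMeasure π] (hac : π ≪ ρ) (hint : Integrable q π)
    (hfin : klDiv π ρ < ⊤) :
    klDiv π ρ - klDiv (ρ.tilted (fun x => -(lam * q x))) ρ
      = klDiv π (ρ.tilted (fun x => -(lam * q x)))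
        + ((lam * ((∫ x, q x ∂(ρ.tilted (fun x => -(lam * q x)))) - ∫ x, q x ∂π) : ℝ) : EReal) := by
  exact three_point_identity_general ρ q lam
    (integrable_exp_neg_mul_of_abs_le hqmeas.aemeasurable (.of_forall hqbdd) lam)
    (.of_bound hqmeas.aestronglyMeasurable C (.of_forall hqbdd)) π hint
end

section
/- If λ > 0 and q is not ρ-almost-everywhere equal to a constant, then the Gibbs tilt π_λ of ρ by λq strictly decreases the expected objective: ∫ q dπ_λ < ∫ q dρ. Consequently there exists Δ > 0 (namely Δ = ∫ q dρ − ∫ q dπ_λ) such that ∫ q dπ_λ ≤ ∫ q dρ − Δ. -/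
open MeasureTheory

/-!
Let `φ` be strictly decreasing and let `m = ∫ q ∂ρ`. The product `(q - m) * (φ m - φ (q ·))` is
nonnegative and vanishes only where `q = m`. Its integral is `m * ∫ φ (q ·) ∂ρ - ∫ q * φ (q ·) ∂ρ`,
which is therefore positive unless `q` is almost everywhere constant. For `φ = exp ∘ f`, dividing by
the normalising constant `∫ φ (q ·) ∂ρ` says that tilting `ρ` by `f ∘ q` lowers the mean of `q`.
-/

theorem sub_mul_sub_pos_of_strictAnti {R : Type*} [Ring R] [LinearOrder R] [IsStrictOrderedRing R]
    {φ : R → R} (hφ : StrictAnti φ) {s t : R} (hst : s ≠ t) : 0 < (s - t) * (φ t - φ s) := by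
  rcases hst.lt_or_gt with hlt | hgt
  · exact mul_pos_of_neg_of_neg (sub_neg.mpr hlt) (sub_neg.mpr (hφ hlt))
  · exact mul_pos (sub_pos.mpr hgt) (sub_pos.mpr (hφ hgt))

theorem abs_apply_le_max_of_antitone {α β : Type*}
    [AddCommGroup α] [LinearOrder α] [IsOrderedAddMonoid α]
    [AddCommGroup β] [LinearOrder β] [IsOrderedAddMonoid β]
    {φ : α → β} (hφ : Antitone φ) {C t : α} (ht : |t| ≤ C) : |φ t| ≤ max |φ C| |φ (-C)| :=
  abs_le_max_abs_abs (hφ (abs_le.mp ht).2) (hφ (abs_le.mp ht).1)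

section Antitone

variable {X : Type*} [MeasurableSpace X] {μ : Measure X} {q : X → ℝ} {φ : ℝ → ℝ}

theorem aestronglyMeasurable_comp_of_antitone (hφ : Antitone φ) (hq : AEMeasurable q μ) :
    AEStronglyMeasurable (fun x => φ (q x)) μ :=
  (hφ.measurable.comp_aemeasurable hq).aestronglyMeasurable

theorem integrable_mul_comp_of_antitone_of_bounded (hφ : Antitone φ) (hq : Integrable q μ) {C : ℝ}
    (hC : ∀ᵐ x ∂μ, |q x| ≤ C) : Integrable (fun x => q x * φ (q x)) μ :=
  hq.mul_bdd (c := max |φ C| |φ (-C)|) (aestronglyMeasurable_comp_of_antitone hφ hq.aemeasurable)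
    (hC.mono fun _ hx => abs_apply_le_max_of_antitone hφ hx)

theorem integrable_comp_of_antitone_of_integrable_mul [IsFiniteMeasure μ] (hφ : Antitone φ)
    (hq : AEMeasurable q μ) (hqφ : Integrable (fun x => q x * φ (q x)) μ) :
    Integrable (fun x => φ (q x)) μ := by
  have hbound (t : ℝ) : |φ t| ≤ max |φ 1| |φ (-1)| + |t * φ t| := by
    rcases le_total |t| 1 with ht | ht
    · exact (abs_apply_le_max_of_antitone hφ ht).trans (le_add_of_nonneg_right (abs_nonneg _))
    · calc |φ t| ≤ |t| * |φ t| := le_mul_of_one_le_left (abs_nonneg _) ht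
        _ = |t * φ t| := (abs_mul _ _).symm
        _ ≤ max |φ 1| |φ (-1)| + |t * φ t| := le_add_of_nonneg_left (by positivity)
  exact ((integrable_const _).add hqφ.abs).mono' (aestronglyMeasurable_comp_of_antitone hφ hq)
    (ae_of_all _ fun x => hbound (q x))

end Antitone

section ProbabilityMeasure

variable {X : Type*} [MeasurableSpace X] {ρ : Measure X} [IsProbabilityMeasure ρ] {q : X → ℝ}

theorem integral_sub_integral_mul_sub {w : X → ℝ} (hq : Integrable q ρ) (hw : Integrable w ρ)
    (hqw : Integrable (fun x => q x * w x) ρ) (c : ℝ) :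
    ∫ x, (q x - ∫ y, q y ∂ρ) * (c - w x) ∂ρ =
      (∫ x, q x ∂ρ) * ∫ x, w x ∂ρ - ∫ x, q x * w x ∂ρ := by
  set m := ∫ x, q x ∂ρ with hm
  have hcentered : Integrable (fun x => (q x - m) * c) ρ :=
    (hq.sub (integrable_const m)).mul_const c
  have hweighted : Integrable (fun x => m * w x - q x * w x) ρ := (hw.const_mul m).sub hqw
  calc ∫ x, (q x - m) * (c - w x) ∂ρ
      = ∫ x, (q x - m) * c + (m * w x - q x * w x) ∂ρ := by congr with x; ring
    _ = (∫ x, q x - m ∂ρ) * c + (m * ∫ x, w x ∂ρ - ∫ x, q x * w x ∂ρ) := by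
      rw [integral_add hcentered hweighted, integral_mul_const,
        integral_sub (hw.const_mul m) hqw, integral_const_mul]
    _ = m * ∫ x, w x ∂ρ - ∫ x, q x * w x ∂ρ := by
      rw [integral_sub hq (integrable_const m), ← hm, integral_const, probReal_univ, one_smul,
        sub_self, zero_mul, zero_add]

theorem integral_mul_comp_lt_of_strictAnti {φ : ℝ → ℝ} (hφ : StrictAnti φ) (hq : Integrable q ρ)
    (hqφ : Integrable (fun x => q x * φ (q x)) ρ) (hnonconst : ¬ ∃ c : ℝ, ∀ᵐ x ∂ρ, q x = c) :
    ∫ x, q x * φ (q x) ∂ρ < (∫ x, q x ∂ρ) * ∫ x, φ (q x) ∂ρ := by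
  set m := ∫ x, q x ∂ρ
  have hφq : Integrable (fun x => φ (q x)) ρ :=
    integrable_comp_of_antitone_of_integrable_mul hφ.antitone hq.aemeasurable hqφ
  let gap : X → ℝ := fun x => (q x - m) * (φ m - φ (q x))
  have gap_pos {x : X} (hx : q x ≠ m) : 0 < gap x := sub_mul_sub_pos_of_strictAnti hφ hx
  have gap_nonneg : 0 ≤ gap := fun x => by
    by_cases hx : q x = m
    · simp [gap, hx]
    · exact (gap_pos hx).le
  have gap_integrable : Integrable gap ρ := by
    have hexpand : gap = fun x => (q x - m) * φ m + (m * φ (q x) - q x * φ (q x)) := by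
      ext x; ring
    rw [hexpand]
    exact ((hq.sub (integrable_const m)).mul_const _).add ((hφq.const_mul m).sub hqφ)
  have gap_integral_ne_zero : ∫ x, gap x ∂ρ ≠ 0 := fun hzero => by
    have hgap : gap =ᵐ[ρ] 0 := (integral_eq_zero_iff_of_nonneg gap_nonneg gap_integrable).mp hzero
    exact hnonconst ⟨m, hgap.mono fun x hx => by_contra fun hne => (gap_pos hne).ne' hx⟩
  have gap_integral_pos : 0 < ∫ x, gap x ∂ρ :=
    (integral_nonneg gap_nonneg).lt_of_ne' gap_integral_ne_zero
  rwa [integral_sub_integral_mul_sub hq hφq hqφ, sub_pos] at gap_integral_pos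

end ProbabilityMeasure

theorem integral_tilted_eq_div {X : Type*} [MeasurableSpace X] (μ : Measure X) (f g : X → ℝ) :
    ∫ x, g x ∂(μ.tilted f) = (∫ x, g x * Real.exp (f x) ∂μ) / ∫ x, Real.exp (f x) ∂μ := by
  rw [integral_tilted, ← integral_div]
  congr with x
  rw [smul_eq_mul, div_mul_eq_mul_div, mul_comm]

theorem gibbs_tilt_strictly_decreases_objective_general
    {X : Type*} [MeasurableSpace X] {ρ : Measure X} [IsProbabilityMeasure ρ]
    {q : X → ℝ} {f : ℝ → ℝ} (hf : StrictAnti f) (hq : Integrable q ρ)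
    (hqexp : Integrable (fun x => q x * Real.exp (f (q x))) ρ)
    (hnonconst : ¬ ∃ c : ℝ, ∀ᵐ x ∂ρ, q x = c) :
    (∫ x, q x ∂(ρ.tilted (fun x => f (q x)))) < ∫ x, q x ∂ρ ∧
      ∃ Δ : ℝ, 0 < Δ ∧
        (∫ x, q x ∂(ρ.tilted (fun x => f (q x)))) ≤ (∫ x, q x ∂ρ) - Δ := by
  have hexp_anti : StrictAnti fun t => Real.exp (f t) := Real.exp_strictMono.comp_strictAnti hf
  have hexp : Integrable (fun x => Real.exp (f (q x))) ρ :=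
    integrable_comp_of_antitone_of_integrable_mul (φ := fun t => Real.exp (f t))
      hexp_anti.antitone hq.aemeasurable hqexp
  have hlt : (∫ x, q x ∂(ρ.tilted (fun x => f (q x)))) < ∫ x, q x ∂ρ := by
    rw [integral_tilted_eq_div, div_lt_iff₀ (integral_exp_pos hexp)]
    exact integral_mul_comp_lt_of_strictAnti hexp_anti hq hqexp hnonconst
  exact ⟨hlt, _, sub_pos.mpr hlt, (sub_sub_cancel _ _).ge⟩

/-- Strict decrease of the expected objective under Gibbs tilting: if `λ > 0` and `q` is not
`ρ`-almost-everywhere constant, then the Gibbs tilt `π_λ = ρ.tilted (-λ q)` satisfies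
`∫ q ∂π_λ < ∫ q ∂ρ`; consequently there exists `Δ > 0` such that
`∫ q ∂π_λ ≤ ∫ q ∂ρ - Δ`. -/
theorem gibbs_tilt_strictly_decreases_objective
    {X : Type*} [MeasurableSpace X] (ρ : Measure X) [IsProbabilityMeasure ρ]
    (q : X → ℝ) (hqmeas : Measurable q) (C : ℝ) (hqbdd : ∀ x, |q x| ≤ C)
    (lam : ℝ) (hlam : 0 < lam)
    (hnonconst : ¬ ∃ c : ℝ, ∀ᵐ x ∂ρ, q x = c) :
    (∫ x, q x ∂(ρ.tilted (fun x => -(lam * q x)))) < ∫ x, q x ∂ρ ∧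
      ∃ Δ : ℝ, 0 < Δ ∧
        (∫ x, q x ∂(ρ.tilted (fun x => -(lam * q x)))) ≤ (∫ x, q x ∂ρ) - Δ := by
  have hq : Integrable q ρ := .of_bound hqmeas.aestronglyMeasurable C (ae_of_all _ hqbdd)
  have hanti : StrictAnti fun t => -(lam * t) := (strictMono_mul_left_of_pos hlam).neg
  exact gibbs_tilt_strictly_decreases_objective_general hanti hq
    (integrable_mul_comp_of_antitone_of_bounded
      (Real.exp_strictMono.comp_strictAnti hanti).antitone hq (ae_of_all _ hqbdd)) hnonconst
end

section
/- The function π ↦ λ Σ_x π(x) q(x) + α Σ_x π(x) log(π(x)/ρ₁(x)) + (1−α) Σ_x π(x) log(π(x)/ρ₂(x)), defined on positive PMFs π on X, attains its minimum uniquely at the PMF π*(x) = ρ₁(x)^α · ρ₂(x)^{1−α} · e^{−λ q(x)} / Z, where Z = Σ_y ρ₁(y)^α ρ₂(y)^{1−α} e^{−λ q(y)}. -/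
open Finset

/-!
Extend the relative entropy `∑ p log (p / w)` to unnormalised weights `w`. For coefficients summing
to one, a weighted sum of relative entropies plus a linear cost is again a relative entropy: that of
`p` with respect to the weighted geometric mean of the priors, tilted by the exponential of minus
the cost. Normalising the second argument of a relative entropy only shifts it by a constant, so
Gibbs' inequality identifies the unique minimiser as the normalised weight.
-/

section RelEntropy

open InformationTheory

variable {X : Type*} [Fintype X] {p w : X → ℝ}

/-- The relative entropy (Kullback–Leibler divergence) of `p` with respect to `w` on a finite type,
where neither argument need be normalised. Points with `p x = 0` contribute `0`; points with
`w x = 0` also do, instead of the customary `∞`, so `w` should be positive. -/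
noncomputable def relEntropy (p w : X → ℝ) : ℝ :=
  ∑ x, p x * Real.log (p x / w x)

/-- The weight `w` rescaled to have total mass one; this is `0` if `w` has total mass zero. -/
noncomputable def normalizedWeight (w : X → ℝ) (x : X) : ℝ :=
  w x / ∑ y, w y

theorem relEntropy_self (p : X → ℝ) : relEntropy p p = 0 :=
  sum_eq_zero fun x _ => by rcases eq_or_ne (p x) 0 with hx | hx <;> simp [hx]

theorem relEntropy_eq_sum_mul_klFun (hw : ∀ x, w x ≠ 0) :
    relEntropy p w = ∑ x, w x * klFun (p x / w x) + (∑ x, p x - ∑ x, w x) := by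
  rw [relEntropy, ← sum_sub_distrib, ← sum_add_distrib]
  refine sum_congr rfl fun x _ => ?_
  have hwx := hw x
  rw [klFun_apply]
  field_simp
  ring

theorem mul_klFun_div_nonneg {a b : ℝ} (ha : 0 ≤ a) (hb : 0 ≤ b) : 0 ≤ b * klFun (a / b) :=
  mul_nonneg hb (klFun_nonneg (div_nonneg ha hb))

theorem relEntropy_nonneg (hp : ∀ x, 0 ≤ p x) (hw : ∀ x, 0 < w x)
    (hwp : ∑ x, w x ≤ ∑ x, p x) : 0 ≤ relEntropy p w := by
  rw [relEntropy_eq_sum_mul_klFun fun x => (hw x).ne']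
  exact add_nonneg (sum_nonneg fun x _ => mul_klFun_div_nonneg (hp x) (hw x).le)
    (sub_nonneg.2 hwp)

theorem relEntropy_eq_zero_iff (hp : ∀ x, 0 ≤ p x) (hw : ∀ x, 0 < w x)
    (hwp : ∑ x, w x ≤ ∑ x, p x) : relEntropy p w = 0 ↔ p = w := by
  refine ⟨fun h => ?_, fun h => h ▸ relEntropy_self p⟩
  have hterm_nonneg : ∀ x ∈ univ, 0 ≤ w x * klFun (p x / w x) :=
    fun x _ => mul_klFun_div_nonneg (hp x) (hw x).le
  rw [relEntropy_eq_sum_mul_klFun fun x => (hw x).ne',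
    add_eq_zero_iff_of_nonneg (sum_nonneg hterm_nonneg) (sub_nonneg.2 hwp),
    sum_eq_zero_iff_of_nonneg hterm_nonneg] at h
  funext x
  have hklFun : klFun (p x / w x) = 0 :=
    (mul_eq_zero.1 (h.1 x (mem_univ x))).resolve_left (hw x).ne'
  rwa [klFun_eq_zero_iff (div_nonneg (hp x) (hw x).le),
    div_eq_one_iff_eq (hw x).ne'] at hklFun

theorem relEntropy_div_const (hw : ∀ x, w x ≠ 0) {c : ℝ} (hc : c ≠ 0) :
    relEntropy p (fun x => w x / c) = relEntropy p w + (∑ x, p x) * Real.log c := by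
  rw [relEntropy, relEntropy, sum_mul, ← sum_add_distrib]
  refine sum_congr rfl fun x _ => ?_
  rcases eq_or_ne (p x) 0 with hpx | hpx
  · simp [hpx]
  · rw [div_div_eq_mul_div, mul_div_right_comm, Real.log_mul (div_ne_zero hpx (hw x)) hc, mul_add]

variable [Nonempty X]

theorem normalizedWeight_pos (hw : ∀ x, 0 < w x) (x : X) : 0 < normalizedWeight w x :=
  div_pos (hw x) (sum_pos (fun y _ => hw y) univ_nonempty)

theorem sum_normalizedWeight (hw : ∀ x, 0 < w x) : ∑ x, normalizedWeight w x = 1 := by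
  simp only [normalizedWeight]
  rw [← sum_div, div_self (sum_pos (fun x _ => hw x) univ_nonempty).ne']

theorem relEntropy_eq_relEntropy_normalizedWeight_sub_log (hw : ∀ x, 0 < w x)
    (hp : ∑ x, p x = 1) :
    relEntropy p w = relEntropy p (normalizedWeight w) - Real.log (∑ x, w x) := by
  have hscale := relEntropy_div_const (p := p) (fun x => (hw x).ne')
    (sum_pos (fun x _ => hw x) univ_nonempty).ne'
  rw [hp, one_mul] at hscale
  exact eq_sub_of_add_eq hscale.symm

theorem relEntropy_normalizedWeight_left (hw : ∀ x, 0 < w x) :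
    relEntropy (normalizedWeight w) w = -Real.log (∑ x, w x) := by
  rw [relEntropy_eq_relEntropy_normalizedWeight_sub_log hw (sum_normalizedWeight hw),
    relEntropy_self, zero_sub]

theorem relEntropy_normalizedWeight_left_le (hw : ∀ x, 0 < w x) (hp₀ : ∀ x, 0 ≤ p x)
    (hp : ∑ x, p x = 1) : relEntropy (normalizedWeight w) w ≤ relEntropy p w := by
  rw [relEntropy_normalizedWeight_left hw, relEntropy_eq_relEntropy_normalizedWeight_sub_log hw hp,
    neg_le_sub_iff_le_add, le_add_iff_nonneg_left]
  exact relEntropy_nonneg hp₀ (normalizedWeight_pos hw) (by rw [sum_normalizedWeight hw, hp])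

theorem relEntropy_eq_relEntropy_normalizedWeight_left_iff (hw : ∀ x, 0 < w x)
    (hp₀ : ∀ x, 0 ≤ p x) (hp : ∑ x, p x = 1) :
    relEntropy p w = relEntropy (normalizedWeight w) w ↔ p = normalizedWeight w := by
  rw [relEntropy_normalizedWeight_left hw, relEntropy_eq_relEntropy_normalizedWeight_sub_log hw hp,
    sub_eq_neg_self]
  exact relEntropy_eq_zero_iff hp₀ (normalizedWeight_pos hw) (by rw [sum_normalizedWeight hw, hp])

end RelEntropy

section TiltedGeomMean

variable {X I : Type*} [Fintype I] {ρ : I → X → ℝ}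

/-- The weighted geometric mean of the priors `ρ i` with exponents `c i`, tilted by the Boltzmann
factor of the cost `q`. It is the unnormalised form of the optimal distribution. -/
noncomputable def tiltedGeomMean (c : I → ℝ) (ρ : I → X → ℝ) (q : X → ℝ) (x : X) : ℝ :=
  (∏ i, ρ i x ^ c i) * Real.exp (-q x)

theorem tiltedGeomMean_pos (hρ : ∀ i x, 0 < ρ i x) (c : I → ℝ) (q : X → ℝ) (x : X) :
    0 < tiltedGeomMean c ρ q x :=
  mul_pos (prod_pos fun i _ => Real.rpow_pos_of_pos (hρ i x) _) (Real.exp_pos _)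

theorem log_tiltedGeomMean (hρ : ∀ i x, 0 < ρ i x) (c : I → ℝ) (q : X → ℝ) (x : X) :
    Real.log (tiltedGeomMean c ρ q x) = ∑ i, c i * Real.log (ρ i x) - q x := by
  have hpow : ∀ i ∈ univ, ρ i x ^ c i ≠ 0 := fun i _ => (Real.rpow_pos_of_pos (hρ i x) _).ne'
  rw [tiltedGeomMean, Real.log_mul (prod_ne_zero_iff.2 hpow) (Real.exp_ne_zero _),
    Real.log_prod hpow, Real.log_exp, ← sub_eq_add_neg]
  simp only [Real.log_rpow (hρ _ x)]

theorem log_div_tiltedGeomMean (hρ : ∀ i x, 0 < ρ i x) {c : I → ℝ} (hc : ∑ i, c i = 1)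
    (q : X → ℝ) {a : ℝ} (ha : a ≠ 0) (x : X) :
    Real.log (a / tiltedGeomMean c ρ q x) = q x + ∑ i, c i * Real.log (a / ρ i x) := by
  simp only [Real.log_div ha (hρ _ x).ne', mul_sub, sum_sub_distrib, ← sum_mul, hc]
  rw [Real.log_div ha (tiltedGeomMean_pos hρ c q x).ne', log_tiltedGeomMean hρ]
  ring

theorem relEntropy_tiltedGeomMean [Fintype X] (hρ : ∀ i x, 0 < ρ i x) {c : I → ℝ}
    (hc : ∑ i, c i = 1) (q p : X → ℝ) :
    relEntropy p (tiltedGeomMean c ρ q) =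
      ∑ x, p x * q x + ∑ i, c i * relEntropy p (ρ i) := by
  simp only [relEntropy, mul_sum]
  rw [sum_comm, ← sum_add_distrib]
  refine sum_congr rfl fun x _ => ?_
  rcases eq_or_ne (p x) 0 with hpx | hpx
  · simp [hpx]
  · rw [log_div_tiltedGeomMean hρ hc q hpx, mul_add, mul_sum]
    simp only [mul_left_comm]

end TiltedGeomMean

theorem augmented_entropic_optimisation_solution_general
    {X I : Type*} [Fintype X] [Nonempty X] [Fintype I]
    (ρ : I → X → ℝ) (hρ : ∀ i x, 0 < ρ i x) (c : I → ℝ) (hc : ∑ i, c i = 1)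
    (q : X → ℝ) (lam : ℝ) (F : (X → ℝ) → ℝ)
    (hF : ∀ π : X → ℝ, F π =
      lam * ∑ x, π x * q x + ∑ i, c i * ∑ x, π x * Real.log (π x / ρ i x))
    (Z : ℝ) (hZ : Z = ∑ y, (∏ i, ρ i y ^ c i) * Real.exp (-(lam * q y)))
    (πstar : X → ℝ)
    (hπstar : ∀ x, πstar x = (∏ i, ρ i x ^ c i) * Real.exp (-(lam * q x)) / Z) :
    ((∀ x, 0 < πstar x) ∧ ∑ x, πstar x = 1) ∧
      ∀ π : X → ℝ, (∀ x, 0 ≤ π x) → ∑ x, π x = 1 →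
        F πstar ≤ F π ∧ (F π = F πstar → π = πstar) := by
  let w := tiltedGeomMean c ρ fun x => lam * q x
  have hw : ∀ x, 0 < w x := tiltedGeomMean_pos hρ c _
  have hF_relEntropy (π : X → ℝ) : F π = relEntropy π w := by
    rw [hF, relEntropy_tiltedGeomMean hρ hc, mul_sum]
    simp only [relEntropy, mul_left_comm]
  obtain rfl : πstar = normalizedWeight w := funext fun x => by rw [hπstar, hZ]; rfl
  simp only [hF_relEntropy]
  exact ⟨⟨normalizedWeight_pos hw, sum_normalizedWeight hw⟩, fun π hπ₀ hπ =>
    ⟨relEntropy_normalizedWeight_left_le hw hπ₀ hπ,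
      (relEntropy_eq_relEntropy_normalizedWeight_left_iff hw hπ₀ hπ).1⟩⟩

/-- The augmented entropic optimisation objective
`π ↦ λ Σ π q + α Σ π log(π/ρ₁) + (1-α) Σ π log(π/ρ₂)`, over positive PMFs on a nonempty finite
type, attains its minimum uniquely at `π*(x) = ρ₁(x)^α ρ₂(x)^(1-α) e^(-λ q x) / Z`. -/
theorem augmented_entropic_optimisation_solution
    {X : Type*} [Fintype X] [Nonempty X]
    (ρ₁ ρ₂ : X → ℝ) (hρ₁pos : ∀ x, 0 < ρ₁ x) (hρ₁sum : ∑ x, ρ₁ x = 1)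
    (hρ₂pos : ∀ x, 0 < ρ₂ x) (hρ₂sum : ∑ x, ρ₂ x = 1)
    (q : X → ℝ) (lam α : ℝ) (hlam : 0 < lam) (hα₀ : 0 < α) (hα₁ : α < 1)
    (F : (X → ℝ) → ℝ)
    (hF : ∀ π : X → ℝ, F π =
      lam * ∑ x, π x * q x + α * ∑ x, π x * Real.log (π x / ρ₁ x)
        + (1 - α) * ∑ x, π x * Real.log (π x / ρ₂ x))
    (Z : ℝ) (hZ : Z = ∑ y, ρ₁ y ^ α * ρ₂ y ^ (1 - α) * Real.exp (-(lam * q y)))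
    (πstar : X → ℝ)
    (hπstar : ∀ x, πstar x = ρ₁ x ^ α * ρ₂ x ^ (1 - α) * Real.exp (-(lam * q x)) / Z) :
    ((∀ x, 0 < πstar x) ∧ ∑ x, πstar x = 1) ∧
      ∀ π : X → ℝ, (∀ x, 0 < π x) → ∑ x, π x = 1 →
        F πstar ≤ F π ∧ (F π = F πstar → π = πstar) := by
  have h := augmented_entropic_optimisation_solution_general ![ρ₁, ρ₂]
    (Fin.forall_fin_two.2 ⟨hρ₁pos, hρ₂pos⟩) ![α, 1 - α] (by simp) q lam F
    (by simpa [add_assoc] using hF) Z (by simpa using hZ) πstar (by simpa using hπstar)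
  exact ⟨h.1, fun π hπ => h.2 π fun x => (hπ x).le⟩
end

section
/- Let (π_g) be the sequence of PMFs on X defined by a positive PMF π_0 and π_{g+1}(x) = π_g(x)^α e^{−λ q(x)} / Σ_y π_g(y)^α e^{−λ q(y)} with 0 < α < 1. Then for every x ∈ X, π_g(x) converges as g → ∞ to π_∞(x) = exp(−(λ/(1−α)) q(x)) / Σ_y exp(−(λ/(1−α)) q(y)). -/
open Finset Filter

/-!
In logarithmic coordinates `p ∝ exp u` the update `p ↦ p ^ α * exp v`, followed by normalization,
becomes the affine map `u ↦ α • u + v`, because normalizing only shifts `u` by a constant. For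
`|α| < 1` the iterates of this map converge to its fixed point `(1 - α)⁻¹ • v`, and the passage
from `u` back to `p` is continuous.
-/

section AffineIteration

theorem iterate_smul_add_of_fixed {R M : Type*} [Ring R] [AddCommGroup M] [Module R M]
    {a : R} {v w : M} (hw : a • w + v = w) (u : M) (n : ℕ) :
    (fun z => a • z + v)^[n] u = a ^ n • (u - w) + w := by
  induction n with
  | zero => simp
  | succ n ih =>
    calc (fun z => a • z + v)^[n + 1] u
        = a • (a ^ n • (u - w) + w) + v := by rw [Function.iterate_succ_apply', ih]
      _ = a ^ (n + 1) • (u - w) + (a • w + v) := by rw [smul_add, smul_smul, ← pow_succ', add_assoc]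
      _ = a ^ (n + 1) • (u - w) + w := by rw [hw]

theorem tendsto_iterate_smul_add {𝕜 E : Type*} [NormedField 𝕜] [AddCommGroup E] [Module 𝕜 E]
    [TopologicalSpace E] [ContinuousAdd E] [ContinuousSMul 𝕜 E] {a : 𝕜} (ha : ‖a‖ < 1) (v u : E) :
    Tendsto (fun n => (fun z => a • z + v)^[n] u) atTop (nhds ((1 - a)⁻¹ • v)) := by
  have one_sub_ne_zero : 1 - a ≠ 0 := by
    rw [sub_ne_zero]
    rintro rfl
    simp at ha
  have fixed : a • (1 - a)⁻¹ • v + v = (1 - a)⁻¹ • v := by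
    match_scalars
    field_simp
    ring
  simp only [iterate_smul_add_of_fixed fixed]
  simpa using ((tendsto_pow_atTop_nhds_zero_of_norm_lt_one ha).smul_const
    (u - (1 - a)⁻¹ • v)).add_const ((1 - a)⁻¹ • v)

end AffineIteration

section Softmax

variable {X : Type*} [Fintype X]

/-- The Gibbs distribution on a finite type with log-weights `u`, i.e. the normalization of
`exp ∘ u`. It maps log-weights, which are only determined up to an additive constant, to
probability mass functions. -/
noncomputable def softmax (u : X → ℝ) (x : X) : ℝ :=
  Real.exp (u x) / ∑ y, Real.exp (u y)

theorem sum_exp_pos [Nonempty X] (u : X → ℝ) : 0 < ∑ y, Real.exp (u y) :=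
  sum_pos (fun y _ => Real.exp_pos (u y)) univ_nonempty

theorem softmax_pos (u : X → ℝ) (x : X) : 0 < softmax u x :=
  have : Nonempty X := ⟨x⟩
  div_pos (Real.exp_pos _) (sum_exp_pos u)

theorem log_softmax (u : X → ℝ) (x : X) :
    Real.log (softmax u x) = u x - Real.log (∑ y, Real.exp (u y)) := by
  have : Nonempty X := ⟨x⟩
  rw [softmax, Real.log_div (Real.exp_ne_zero _) (sum_exp_pos u).ne', Real.log_exp]

theorem softmax_sub_const (u : X → ℝ) (c : ℝ) : softmax (fun x => u x - c) = softmax u := by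
  funext x
  simp only [softmax, Real.exp_sub, ← sum_div]
  exact div_div_div_cancel_right₀ (Real.exp_ne_zero c) _ _

theorem continuous_softmax : Continuous (softmax : (X → ℝ) → X → ℝ) := by
  refine continuous_pi fun x => ?_
  have : Nonempty X := ⟨x⟩
  exact Continuous.div (by fun_prop) (by fun_prop) fun u => (sum_exp_pos u).ne'

/-- The belief update with exponent `α` and log-likelihood `v`: the normalization of
`p ^ α * exp v`. -/
noncomputable def temperedUpdate (α : ℝ) (v p : X → ℝ) (x : X) : ℝ :=
  p x ^ α * Real.exp (v x) / ∑ y, p y ^ α * Real.exp (v y)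

theorem temperedUpdate_of_pos (α : ℝ) (v : X → ℝ) {p : X → ℝ} (hp : ∀ x, 0 < p x) :
    temperedUpdate α v p = softmax (α • (fun x => Real.log (p x)) + v) := by
  have weight_eq (x : X) :
      p x ^ α * Real.exp (v x) = Real.exp ((α • (fun x => Real.log (p x)) + v) x) := by
    rw [Real.rpow_def_of_pos (hp x), ← Real.exp_add, mul_comm]
    rfl
  funext x
  simp only [temperedUpdate, softmax, weight_eq]

theorem semiconj_softmax_temperedUpdate (α : ℝ) (v : X → ℝ) :
    Function.Semiconj softmax (fun u => α • u + v) (temperedUpdate α v) := by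
  intro u
  have log_weight_eq : α • (fun x => Real.log (softmax u x)) + v =
      fun x => (α • u + v) x - α * Real.log (∑ y, Real.exp (u y)) := by
    funext x
    simp only [log_softmax, Pi.add_apply, Pi.smul_apply, smul_eq_mul]
    ring
  rw [temperedUpdate_of_pos α v (softmax_pos u), log_weight_eq, softmax_sub_const]

theorem tendsto_iterate_temperedUpdate {α : ℝ} (hα : |α| < 1) (v : X → ℝ) {p : X → ℝ}
    (hp : ∀ x, 0 < p x) :
    Tendsto (fun g => (temperedUpdate α v)^[g] p) atTop (nhds (softmax ((1 - α)⁻¹ • v))) := by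
  -- An unnormalized `p` becomes a softmax after one update.
  rw [← tendsto_add_atTop_iff_nat 1]
  simp only [Function.iterate_succ_apply, temperedUpdate_of_pos α v hp,
    ← ((semiconj_softmax_temperedUpdate α v).iterate_right _).eq]
  exact (continuous_softmax.tendsto _).comp (tendsto_iterate_smul_add hα v _)

end Softmax

theorem belief_update_limit_general {X : Type*} [Fintype X] (q : X → ℝ) (lam : ℝ) {α : ℝ}
    (hα : |α| < 1) {π : ℕ → X → ℝ} (hπ₀pos : ∀ x, 0 < π 0 x)
    (hrec : ∀ g x, π (g + 1) x =
      π g x ^ α * Real.exp (-(lam * q x)) / ∑ y, π g y ^ α * Real.exp (-(lam * q y))) (x : X) :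
    Tendsto (fun g => π g x) atTop
      (nhds (Real.exp (-(lam / (1 - α)) * q x) / ∑ y, Real.exp (-(lam / (1 - α)) * q y))) := by
  let v : X → ℝ := fun y => -(lam * q y)
  have iterate_eq (g : ℕ) : π g = (temperedUpdate α v)^[g] (π 0) := by
    induction g with
    | zero => rfl
    | succ g ih =>
      rw [Function.iterate_succ_apply', ← ih]
      exact funext (hrec g)
  have limit_log_weight_eq : (1 - α)⁻¹ • v = fun y => -(lam / (1 - α)) * q y := by
    funext y
    simp only [v, Pi.smul_apply, smul_eq_mul]
    ring
  have tendsto_π := tendsto_iterate_temperedUpdate hα v hπ₀pos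
  simp only [← iterate_eq, limit_log_weight_eq] at tendsto_π
  exact tendsto_pi_nhds.1 tendsto_π x

/-- Convergence of the belief-update recursion `π_{g+1} ∝ π_g^α e^(-λ q)`: for every `x`,
`π_g(x)` converges to `exp(-(λ/(1-α)) q(x)) / Σ_y exp(-(λ/(1-α)) q(y))` as `g → ∞`. -/
theorem belief_update_limit
    {X : Type*} [Fintype X] [Nonempty X]
    (q : X → ℝ) (lam α : ℝ) (hlam : 0 < lam) (hα₀ : 0 < α) (hα₁ : α < 1)
    (π : ℕ → X → ℝ)
    (hπ₀pos : ∀ x, 0 < π 0 x) (hπ₀sum : ∑ x, π 0 x = 1)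
    (hrec : ∀ g x, π (g + 1) x =
      π g x ^ α * Real.exp (-(lam * q x)) / ∑ y, π g y ^ α * Real.exp (-(lam * q y))) :
    ∀ x, Tendsto (fun g => π g x) atTop
      (nhds (Real.exp (-(lam / (1 - α)) * q x) / ∑ y, Real.exp (-(lam / (1 - α)) * q y))) := by
  exact belief_update_limit_general q lam (abs_lt.2 ⟨by linarith, hα₁⟩) hπ₀pos hrec
end

section
/- Define backward values V_N(s) = λ r_N(s) and, for n < N, V_n(s) = inf over PMFs π on A of Σ_a π(a)·[λ r_n(s,a) + α log(π(a)/ρ_n(s)(a)) + (1−α) log(|A|·π(a)) + V_{n+1}(f_n(s,a))]. Then for every n ≤ N and state s, V_n(s) equals the infimum, over all policy sequences (π_n, …, π_{N−1}) with each π_k : S → PMF(A), of the expectation—under the stochastic trajectory started at s where a_k ∼ π_k(s_k) and s_{k+1} = f_k(s_k, a_k)—of λ r_N(s_N) + Σ_{k=n}^{N−1} [λ r_k(s_k,a_k) + α log(π_k(s_k)(a_k)/ρ_k(s_k)(a_k)) + (1−α) log(|A|·π_k(s_k)(a_k))]. -/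
open Finset

/-- The probability of the action sequence `as` under the (time-indexed) stochastic policy `p`,
along the deterministic rollout of the dynamics `f` started at time `n` in state `s`. -/
def pathProb {S A : Type*} (p : ℕ → S → A → ℝ) (f : ℕ → S → A → S) :
    ℕ → S → List A → ℝ
  | _, _, [] => 1
  | n, s, a :: as => p n s a * pathProb p f (n + 1) (f n s a) as

/-- The accumulated cost of the action sequence `as` for running costs `c` and terminal cost `cT`,
along the deterministic rollout of the dynamics `f` started at time `n` in state `s`. -/
def totalCost {S A : Type*} (f : ℕ → S → A → S) (c : ℕ → S → A → ℝ) (cT : S → ℝ) :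
    ℕ → S → List A → ℝ
  | _, s, [] => cT s
  | n, s, a :: as => c n s a + totalCost f c cT (n + 1) (f n s a) as

/-!
Conditioning on the first action turns the expected cost of a policy into a one-step recursion.
A function `V` that solves the Bellman recursion is then below the expected cost of every policy, by
backward induction, and the policy made of minimisers of the one-step problems turns all the
inequalities into equalities. Minimisers exist because `x * log (c * x)` tends to `0`, its value at
`0` by the convention `log 0 = 0`, as `x → 0`: the one-step objective is therefore continuous on the
compact simplex.
-/

section PathSums

variable {S A : Type*} [Fintype A]

theorem sum_comp_ofFn_succ {M : Type*} [AddCommMonoid M] (g : List A → M) (m : ℕ) :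
    ∑ as : Fin (m + 1) → A, g (List.ofFn as) =
      ∑ a, ∑ as : Fin m → A, g (a :: List.ofFn as) := by
  rw [← (Fin.consEquiv fun _ : Fin (m + 1) ↦ A).sum_comp, Fintype.sum_prod_type]
  simp only [Fin.consEquiv_apply, List.ofFn_succ, Fin.cons_zero, Fin.cons_succ]

theorem sum_pathProb_eq_one {P : ℕ → S → A → ℝ} (hP : ∀ k t, ∑ a, P k t a = 1)
    (f : ℕ → S → A → S) (m n : ℕ) (s : S) :
    ∑ as : Fin m → A, pathProb P f n s (List.ofFn as) = 1 := by
  induction m generalizing n s with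
  | zero => simp [pathProb]
  | succ m ih => simp only [sum_comp_ofFn_succ, pathProb, ← mul_sum, ih, mul_one, hP]

/-- The expected cost-to-go of the policy `P` from state `s` at time `n` up to the horizon `N`, for
running costs `c` and terminal cost `cT`. Only `n ≤ N` is meaningful: for `n > N` the truncated
subtraction `N - n` makes it the terminal cost at `s`. -/
def expectedCost (f : ℕ → S → A → S) (P c : ℕ → S → A → ℝ) (cT : S → ℝ) (N n : ℕ) (s : S) : ℝ :=
  ∑ as : Fin (N - n) → A,
    pathProb P f n s (List.ofFn as) * totalCost f c cT n s (List.ofFn as)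

variable {f : ℕ → S → A → S} {P c : ℕ → S → A → ℝ} {cT : S → ℝ} {N n : ℕ} {V : ℕ → S → ℝ}

@[simp]
theorem expectedCost_self (s : S) : expectedCost f P c cT N N s = cT s := by
  rw [expectedCost, Nat.sub_self]
  simp [pathProb, totalCost]

theorem expectedCost_of_lt (hP : ∀ k t, ∑ a, P k t a = 1) (hn : n < N) (s : S) :
    expectedCost f P c cT N n s =
      ∑ a, P n s a * (c n s a + expectedCost f P c cT N (n + 1) (f n s a)) := by
  have hsub : N - n = N - (n + 1) + 1 := by lia
  rw [expectedCost, hsub,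
    sum_comp_ofFn_succ fun as ↦ pathProb P f n s as * totalCost f c cT n s as]
  refine sum_congr rfl fun a _ ↦ ?_
  simp only [pathProb, totalCost, expectedCost, mul_assoc, ← mul_sum, mul_add, sum_add_distrib,
    ← sum_mul, sum_pathProb_eq_one hP, one_mul]

theorem eq_expectedCost_of_recursion (hP : ∀ k t, ∑ a, P k t a = 1) (hVN : ∀ s, V N s = cT s)
    (hV : ∀ n < N, ∀ s, V n s = ∑ a, P n s a * (c n s a + V (n + 1) (f n s a)))
    (hn : n ≤ N) (s : S) : V n s = expectedCost f P c cT N n s := by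
  induction hn using Nat.decreasingInduction generalizing s with
  | self => rw [expectedCost_self, hVN]
  | of_succ n hn ih => simp only [hV n hn, expectedCost_of_lt hP hn, ih]

theorem le_expectedCost_of_recursion (hP : ∀ k t, P k t ∈ stdSimplex ℝ A)
    (hVN : ∀ s, V N s ≤ cT s)
    (hV : ∀ n < N, ∀ s, V n s ≤ ∑ a, P n s a * (c n s a + V (n + 1) (f n s a)))
    (hn : n ≤ N) (s : S) : V n s ≤ expectedCost f P c cT N n s := by
  induction hn using Nat.decreasingInduction generalizing s with
  | self => rw [expectedCost_self]; exact hVN s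
  | of_succ n hn ih =>
    calc V n s ≤ ∑ a, P n s a * (c n s a + V (n + 1) (f n s a)) := hV n hn s
      _ ≤ ∑ a, P n s a * (c n s a + expectedCost f P c cT N (n + 1) (f n s a)) := by
        gcongr with a
        · exact (hP n s).1 a
        · exact ih (f n s a)
      _ = expectedCost f P c cT N n s := (expectedCost_of_lt (fun k t ↦ (hP k t).2) hn s).symm

end PathSums

section BellmanPrinciple

variable {S A : Type*} [Fintype A] [Nonempty A] {f : ℕ → S → A → S}
  {cost : ℕ → S → (A → ℝ) → A → ℝ} {cT : S → ℝ} {N n : ℕ} {V : ℕ → S → ℝ}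

theorem isLeast_expectedCost_of_isLeast (hVN : ∀ s, V N s = cT s)
    (hV : ∀ n < N, ∀ s, IsLeast
      ((fun π ↦ ∑ a, π a * (cost n s π a + V (n + 1) (f n s a))) '' stdSimplex ℝ A) (V n s))
    (hn : n ≤ N) (s : S) :
    IsLeast ((fun P ↦ expectedCost f P (fun k t ↦ cost k t (P k t)) cT N n s) ''
      {P | ∀ k t, P k t ∈ stdSimplex ℝ A}) (V n s) := by
  have exists_minimiser (k : ℕ) (t : S) : ∃ π ∈ stdSimplex ℝ A,
      k < N → V k t = ∑ a, π a * (cost k t π a + V (k + 1) (f k t a)) := by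
    by_cases hk : k < N
    · obtain ⟨π, hπ, hπV⟩ := (hV k hk t).1
      exact ⟨π, hπ, fun _ ↦ hπV.symm⟩
    · obtain ⟨π, hπ⟩ : (stdSimplex ℝ A).Nonempty := Set.Nonempty.of_subtype
      exact ⟨π, hπ, fun hk' ↦ absurd hk' hk⟩
  choose Q hQ hVQ using exists_minimiser
  refine ⟨⟨Q, hQ, ?_⟩, ?_⟩
  · exact (eq_expectedCost_of_recursion (fun k t ↦ (hQ k t).2) hVN
      (fun k hk t ↦ hVQ k t hk) hn s).symm
  · rintro _ ⟨P, hP, rfl⟩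
    exact le_expectedCost_of_recursion hP (fun t ↦ (hVN t).le)
      (fun k hk t ↦ (hV k hk t).2 ⟨P k t, hP k t, rfl⟩) hn s

theorem isLeast_expectedCost_of_continuousOn
    (hcost : ∀ n < N, ∀ s a, ContinuousOn (fun π ↦ π a * cost n s π a) (stdSimplex ℝ A))
    (hVN : ∀ s, V N s = cT s)
    (hV : ∀ n < N, ∀ s, V n s =
      sInf ((fun π ↦ ∑ a, π a * (cost n s π a + V (n + 1) (f n s a))) '' stdSimplex ℝ A))
    (hn : n ≤ N) (s : S) :
    IsLeast ((fun P ↦ expectedCost f P (fun k t ↦ cost k t (P k t)) cT N n s) ''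
      {P | ∀ k t, P k t ∈ stdSimplex ℝ A}) (V n s) := by
  refine isLeast_expectedCost_of_isLeast hVN (fun k hk t ↦ ?_) hn s
  have objective_continuousOn : ContinuousOn
      (fun π ↦ ∑ a, π a * (cost k t π a + V (k + 1) (f k t a))) (stdSimplex ℝ A) := by
    simp only [mul_add]
    exact continuousOn_finsetSum _ fun a _ ↦ (hcost k hk t a).add (by fun_prop)
  rw [hV k hk t]
  exact ((isCompact_stdSimplex ℝ A).image_of_continuousOn objective_continuousOn).isLeast_sInf
    (Set.Nonempty.of_subtype.image _)

end BellmanPrinciple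

section EntropicCost

theorem continuous_mul_log_const_mul {c : ℝ} (hc : c ≠ 0) :
    Continuous fun x : ℝ ↦ x * Real.log (c * x) := by
  have mul_log_eq (x : ℝ) : x * Real.log (c * x) = c⁻¹ * (c * x * Real.log (c * x)) := by
    field_simp
  simp only [mul_log_eq]
  exact continuous_const.mul (Real.continuous_mul_log.comp (continuous_const_mul c))

variable {A : Type*} [Fintype A]

/-- The running cost `c` of an action drawn from `π`, regularised by the log-likelihood ratios of
`π` against the prior `ρ`, with weight `α`, and against the uniform distribution, with weight `β`.
-/
noncomputable def entropicCost (α β : ℝ) (c ρ π : A → ℝ) (a : A) : ℝ :=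
  c a + α * Real.log (π a / ρ a) + β * Real.log ((Fintype.card A : ℝ) * π a)

theorem continuous_mul_entropicCost (α β : ℝ) (c : A → ℝ) {ρ : A → ℝ} {a : A} (hρ : ρ a ≠ 0) :
    Continuous fun π : A → ℝ ↦ π a * entropicCost α β c ρ π a := by
  have : Nonempty A := ⟨a⟩
  have card_ne_zero : (Fintype.card A : ℝ) ≠ 0 := Nat.cast_ne_zero.mpr Fintype.card_ne_zero
  have expand (π : A → ℝ) : π a * entropicCost α β c ρ π a =
      π a * c a + α * (π a * Real.log ((ρ a)⁻¹ * π a)) +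
        β * (π a * Real.log ((Fintype.card A : ℝ) * π a)) := by
    rw [entropicCost, div_eq_inv_mul]
    ring
  have eval_continuous : Continuous fun π : A → ℝ ↦ π a := continuous_apply a
  have prior_term := (continuous_mul_log_const_mul (inv_ne_zero hρ)).comp eval_continuous
  have uniform_term := (continuous_mul_log_const_mul card_ne_zero).comp eval_continuous
  simp only [expand]
  exact ((eval_continuous.mul_const _).add (prior_term.const_mul α)).add (uniform_term.const_mul β)

end EntropicCost

theorem entropic_bellman_recursion_general {S A : Type*} [Fintype A] [Nonempty A] {N : ℕ}
    {f : ℕ → S → A → S} {c : ℕ → S → A → ℝ} {cT : S → ℝ} {α β : ℝ} {ρ : ℕ → S → A → ℝ}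
    (hρ : ∀ n s a, 0 < ρ n s a) {V : ℕ → S → ℝ} (hVN : ∀ s, V N s = cT s)
    (hV : ∀ n < N, ∀ s, V n s =
      sInf {v : ℝ | ∃ π : A → ℝ, (∀ a, 0 ≤ π a) ∧ (∑ a, π a = 1) ∧
        v = ∑ a, π a * (entropicCost α β (c n s) (ρ n s) π a + V (n + 1) (f n s a))})
    {n : ℕ} (hn : n ≤ N) (s : S) :
    IsLeast {v : ℝ | ∃ P : ℕ → S → A → ℝ, (∀ k t, (∀ a, 0 ≤ P k t a) ∧ (∑ a, P k t a = 1)) ∧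
      v = expectedCost f P (fun k t ↦ entropicCost α β (c k t) (ρ k t) (P k t)) cT N n s}
      (V n s) := by
  have cost_continuousOn (k : ℕ) (_ : k < N) (t : S) (a : A) :
      ContinuousOn (fun π ↦ π a * entropicCost α β (c k t) (ρ k t) π a) (stdSimplex ℝ A) :=
    (continuous_mul_entropicCost α β (c k t) (hρ k t a).ne').continuousOn
  simpa only [Set.image, stdSimplex, Set.mem_ofPred_eq, eq_comm] using
    isLeast_expectedCost_of_continuousOn (f := f) cost_continuousOn hVN
      (fun k hk t ↦ by
        simpa only [Set.image, stdSimplex, Set.mem_ofPred_eq, and_assoc, eq_comm] using hV k hk t)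
      hn s

/-- The paper's Lemma 1: the entropic Bellman backward recursion computes the infimum, over all
policy sequences, of the expected entropy-regularised trajectory cost of the stochastic rollout
`a_k ∼ π_k(s_k)`, `s_{k+1} = f_k(s_k, a_k)` started at `s`. -/
theorem entropic_bellman_recursion
    {S : Type*} {A : Type*} [Fintype A] [Nonempty A]
    (N : ℕ) (hN : 1 ≤ N)
    (f : ℕ → S → A → S) (r : ℕ → S → A → ℝ) (rT : S → ℝ)
    (lam α : ℝ) (hlam : 0 < lam) (hα₀ : 0 < α) (hα₁ : α < 1)
    (ρ : ℕ → S → A → ℝ) (hρpos : ∀ n s a, 0 < ρ n s a) (hρsum : ∀ n s, ∑ a, ρ n s a = 1)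
    (V : ℕ → S → ℝ)
    (hVN : ∀ s, V N s = lam * rT s)
    (hV : ∀ n, n < N → ∀ s, V n s =
      sInf {v : ℝ | ∃ π : A → ℝ, (∀ a, 0 ≤ π a) ∧ (∑ a, π a = 1) ∧
        v = ∑ a, π a * (lam * r n s a + α * Real.log (π a / ρ n s a)
          + (1 - α) * Real.log ((Fintype.card A : ℝ) * π a) + V (n + 1) (f n s a))}) :
    ∀ n, n ≤ N → ∀ s, V n s =
      sInf {v : ℝ | ∃ P : ℕ → S → A → ℝ,
        (∀ k t, (∀ a, 0 ≤ P k t a) ∧ (∑ a, P k t a = 1)) ∧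
        v = ∑ as : Fin (N - n) → A,
          pathProb P f n s (List.ofFn as) *
            totalCost f
              (fun k t a => lam * r k t a + α * Real.log (P k t a / ρ k t a)
                + (1 - α) * Real.log ((Fintype.card A : ℝ) * P k t a))
              (fun t => lam * rT t) n s (List.ofFn as)} := by
  intro n hn s
  exact (entropic_bellman_recursion_general hρpos hVN hV hn s).csInf_eq.symm
end

section
/- Define Z_N(s) = exp(−λ r_N(s)) and, backward for n < N, Z_n(s) = Σ_a ρ_n(s)(a)^α · e^{−λ r_n(s,a)} · Z_{n+1}(f_n(s,a)). Then for every n and state s, Z_n(s) equals the expectation, over action sequences (a_n, …, a_{N−1}) drawn sequentially as a_k ∼ ρ_k(s_k) along the deterministic rollout s_{k+1} = f_k(s_k, a_k) started at s_n = s, of exp(−R_n), where R_n = λ r_N(s_N) + Σ_{k=n}^{N−1} [λ r_k(s_k, a_k) + (1−α) log ρ_k(s_k)(a_k)]. -/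
open Finset

/-!
Absorbing the factor `ρ ^ (α - 1)` into the cost turns the recursion for `Z` into a linear backward
recursion with weights `ρ * exp (-c)`, where `c = λ r + (1 - α) log ρ`. Unrolling it expresses `Z_n`
as a sum over action sequences of the product of these weights times `Z_N` at the final state, and
each summand factors as the path probability under `ρ` times `exp` of minus the total cost.
-/

/-- The state at which the deterministic rollout of the dynamics `f` under the action sequence `as`,
started at time `n` in state `s`, ends; the terminal cost is charged there. -/
def finalState {S A : Type*} (f : ℕ → S → A → S) : ℕ → S → List A → S
  | _, s, [] => s
  | n, s, a :: as => finalState f (n + 1) (f n s a) as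

theorem sum_ofFn_succ {A M : Type*} [Fintype A] [AddCommMonoid M] (m : ℕ) (g : List A → M) :
    ∑ as : Fin (m + 1) → A, g (List.ofFn as) =
      ∑ a, ∑ as : Fin m → A, g (a :: List.ofFn as) := by
  rw [← (Fin.consEquiv fun _ => A).sum_comp, Fintype.sum_prod_type]
  exact sum_congr rfl fun a _ => sum_congr rfl fun as _ => congrArg g (List.ofFn_cons a as)

theorem rpow_eq_mul_exp_neg_one_sub_mul_log {x : ℝ} (hx : 0 < x) (α : ℝ) :
    x ^ α = x * Real.exp (-((1 - α) * Real.log x)) := by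
  calc x ^ α = Real.exp (Real.log x + -((1 - α) * Real.log x)) := by
        rw [Real.rpow_def_of_pos hx]; ring_nf
    _ = x * Real.exp (-((1 - α) * Real.log x)) := by rw [Real.exp_add, Real.exp_log hx]

section Rollout

variable {S A : Type*} (f : ℕ → S → A → S)

theorem eq_sum_pathProb_mul_finalState_of_backward_recursion [Fintype A] {N : ℕ}
    {w : ℕ → S → A → ℝ} {Z : ℕ → S → ℝ}
    (hZ : ∀ n < N, ∀ s, Z n s = ∑ a, w n s a * Z (n + 1) (f n s a))
    {m n : ℕ} (hmn : n + m = N) (s : S) :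
    Z n s = ∑ as : Fin m → A,
      pathProb w f n s (List.ofFn as) * Z N (finalState f n s (List.ofFn as)) := by
  induction m generalizing n s with
  | zero =>
    obtain rfl : n = N := hmn
    simp [pathProb, finalState]
  | succ m ih =>
    rw [hZ n (by lia) s,
      sum_ofFn_succ m fun as => pathProb w f n s as * Z N (finalState f n s as)]
    refine sum_congr rfl fun a _ => ?_
    simp only [ih (n := n + 1) (by lia) (f n s a), mul_sum, pathProb, finalState, mul_assoc]

theorem pathProb_mul_exp_neg_mul_exp_neg_finalState (p c : ℕ → S → A → ℝ) (cT : S → ℝ)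
    (n : ℕ) (s : S) (as : List A) :
    pathProb (fun k t a => p k t a * Real.exp (-c k t a)) f n s as *
        Real.exp (-cT (finalState f n s as)) =
      pathProb p f n s as * Real.exp (-totalCost f c cT n s as) := by
  induction as generalizing n s with
  | nil => rfl
  | cons a as ih =>
    simp only [pathProb, finalState, totalCost, neg_add, Real.exp_add]
    rw [mul_assoc, ih]
    ring

end Rollout

theorem desirability_path_integral_general
    {S : Type*} {A : Type*} [Fintype A]
    (N : ℕ) (f : ℕ → S → A → S) (r : ℕ → S → A → ℝ) (rT : S → ℝ) (lam α : ℝ)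
    (ρ : ℕ → S → A → ℝ) (hρpos : ∀ n s a, 0 < ρ n s a)
    (Z : ℕ → S → ℝ)
    (hZN : ∀ s, Z N s = Real.exp (-(lam * rT s)))
    (hZ : ∀ n, n < N → ∀ s, Z n s =
      ∑ a, ρ n s a ^ α * Real.exp (-(lam * r n s a)) * Z (n + 1) (f n s a)) :
    ∀ n, n ≤ N → ∀ s, Z n s =
      ∑ as : Fin (N - n) → A,
        pathProb ρ f n s (List.ofFn as) *
          Real.exp (-(totalCost f
            (fun k t a => lam * r k t a + (1 - α) * Real.log (ρ k t a))
            (fun t => lam * rT t) n s (List.ofFn as))) := by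
  intro n hn s
  have tilted_recursion : ∀ k < N, ∀ t, Z k t = ∑ a, ρ k t a *
      Real.exp (-(lam * r k t a + (1 - α) * Real.log (ρ k t a))) * Z (k + 1) (f k t a) := by
    intro k hk t
    rw [hZ k hk t]
    refine sum_congr rfl fun a _ => ?_
    rw [rpow_eq_mul_exp_neg_one_sub_mul_log (hρpos k t a) α, neg_add, Real.exp_add]
    ring
  rw [eq_sum_pathProb_mul_finalState_of_backward_recursion f tilted_recursion
    (Nat.add_sub_of_le hn) s]
  refine sum_congr rfl fun as _ => ?_
  rw [hZN]
  exact pathProb_mul_exp_neg_mul_exp_neg_finalState f ρ _ (fun t => lam * rT t) n s (List.ofFn as)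

/-- The path-integral formula of the paper's Corollary 1: the desirability function `Z_n`,
defined by the backward recursion `Z_N(s) = exp(-λ r_N(s))`,
`Z_n(s) = Σ_a ρ_n(s)(a)^α e^(-λ r_n(s,a)) Z_{n+1}(f_n(s,a))`, equals the expectation over
action sequences drawn from the prior policies `ρ` along the deterministic rollout of
`exp (-R_n)`, where `R_n` accumulates `λ r_k(s_k,a_k) + (1-α) log ρ_k(s_k)(a_k)` plus the
terminal cost `λ r_N(s_N)`. -/
theorem desirability_path_integral
    {S : Type*} {A : Type*} [Fintype A] [Nonempty A]
    (N : ℕ) (hN : 1 ≤ N)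
    (f : ℕ → S → A → S) (r : ℕ → S → A → ℝ) (rT : S → ℝ)
    (lam α : ℝ) (hlam : 0 < lam) (hα₀ : 0 < α) (hα₁ : α < 1)
    (ρ : ℕ → S → A → ℝ) (hρpos : ∀ n s a, 0 < ρ n s a) (hρsum : ∀ n s, ∑ a, ρ n s a = 1)
    (Z : ℕ → S → ℝ)
    (hZN : ∀ s, Z N s = Real.exp (-(lam * rT s)))
    (hZ : ∀ n, n < N → ∀ s, Z n s =
      ∑ a, ρ n s a ^ α * Real.exp (-(lam * r n s a)) * Z (n + 1) (f n s a)) :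
    ∀ n, n ≤ N → ∀ s, Z n s =
      ∑ as : Fin (N - n) → A,
        pathProb ρ f n s (List.ofFn as) *
          Real.exp (-(totalCost f
            (fun k t a => lam * r k t a + (1 - α) * Real.log (ρ k t a))
            (fun t => lam * rT t) n s (List.ofFn as))) :=
  desirability_path_integral_general N f r rT lam α ρ hρpos Z hZN hZ
end
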